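/- Let n ≥ 1 and let 1 ≤ i, j ≤ n. Let D(i, j) denote the number of squares (i', j') with 1 ≤ i', j' ≤ n, (i', j') ≠ (i, j), and |i − i'| = |j − j'|. Then D(i, j) = (n − 3) + 2 · min{i, j, n + 1 − i, n + 1 − j}. -/

import Mathlib

/-!
The square `(i, j)` lies on exactly one diagonal and one anti-diagonal, and these meet only in
`(i, j)`. Each of the two lines is determined by its row coordinate, which ranges over an interval
cut out by the edges of the board. Removing the row `i` from both intervals leaves two disjoint
families of squares that exhaust those counted by `D`, and the lengths of the intervals give the
formula (linear arithmetic with `min` and `max`).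
-/

/-- `D n i j` (for `1`-based coordinates) is the number of squares `(i', j')` of the
`n × n` board with `1 ≤ i', j' ≤ n`, other than `(i, j)` itself, satisfying
`|i - i'| = |j - j'|`, i.e. sharing a diagonal or anti-diagonal with `(i, j)`. -/
def D (n i j : ℕ) : ℕ :=
  (((Finset.Icc 1 n) ×ˢ (Finset.Icc 1 n)).filter (fun p : ℕ × ℕ =>
    p ≠ (i, j) ∧ |(i : ℤ) - (p.1 : ℤ)| = |(j : ℤ) - (p.2 : ℤ)|)).card

/-- The squares counted by `D` are the rest of the diagonal together with the rest of the
anti-diagonal, each parametrized by its row. The truncated subtractions in the column coordinates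
and interval ends are exact, or truncate harmlessly under the `max`. -/
theorem diag_filter_eq (n i j : ℕ) (hi : 1 ≤ i) (hi' : i ≤ n) (hj : 1 ≤ j) (hj' : j ≤ n) :
    ((Finset.Icc 1 n) ×ˢ (Finset.Icc 1 n)).filter (fun p : ℕ × ℕ =>
      p ≠ (i, j) ∧ |(i : ℤ) - (p.1 : ℤ)| = |(j : ℤ) - (p.2 : ℤ)|) =
    ((Finset.Icc (max 1 (i + 1 - j)) (min n (n + i - j))).erase i).image
        (fun x => (x, x + j - i)) ∪
      ((Finset.Icc (max 1 (i + j - n)) (min n (i + j - 1))).erase i).image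
        (fun x => (x, i + j - x)) := by
  ext ⟨x, y⟩
  simp only [Finset.mem_filter, Finset.mem_product, Finset.mem_Icc, Finset.mem_union,
    Finset.mem_image, Finset.mem_erase, Prod.mk.injEq, ne_eq, abs_eq_abs]
  constructor
  · rintro ⟨⟨hx, hy⟩, hne, h | h⟩
    · exact Or.inl ⟨x, by omega, rfl, by omega⟩
    · exact Or.inr ⟨x, by omega, rfl, by omega⟩
  · rintro (⟨z, hz, rfl, rfl⟩ | ⟨z, hz, rfl, rfl⟩) <;> omega

theorem diagonal_degree_formula (n i j : ℕ) (hi : 1 ≤ i) (hi' : i ≤ n)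
    (hj : 1 ≤ j) (hj' : j ≤ n) :
    (D n i j : ℤ) =
      ((n : ℤ) - 3) +
        2 * min (min (i : ℤ) (j : ℤ)) (min ((n : ℤ) + 1 - i) ((n : ℤ) + 1 - j)) := by
  unfold D
  rw [diag_filter_eq n i j hi hi' hj hj', Finset.card_union_of_disjoint,
    Finset.card_image_of_injective _ (fun a b h => (Prod.mk.inj h).1),
    Finset.card_image_of_injective _ (fun a b h => (Prod.mk.inj h).1),
    Finset.card_erase_of_mem (by rw [Finset.mem_Icc]; omega),
    Finset.card_erase_of_mem (by rw [Finset.mem_Icc]; omega), Nat.card_Icc, Nat.card_Icc]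
  · omega
  -- A common square in row `x` would satisfy `x + j - i = i + j - x`, forcing `x = i`.
  · rw [Finset.disjoint_left]
    rintro ⟨x, y⟩ h₁ h₂
    simp only [Finset.mem_image, Finset.mem_erase, Finset.mem_Icc, Prod.mk.injEq] at h₁ h₂
    obtain ⟨a, ha, rfl, rfl⟩ := h₁
    obtain ⟨b, hb, rfl, h⟩ := h₂
    omega
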